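/- Let V be a finite-dimensional irreducible □_q-module of type 1 and let ^ρV denote V twisted via the automorphism ρ of □_q sending x_i ↦ x_{i+1}. Then the Drinfel'd polynomials P_V and P_{^ρV} are partners; in particular, the roots of P_{^ρV} are exactly the inverses of the roots of P_V. -/

import Mathlib

/-!
Let `U_0, …, U_d` be the weight spaces of `K₀` on the `□_q`-module `V`, with `σ_j` the eigenvalue
of `(e₁⁺)^j (e₀⁺)^j` on `U_0`, and mark with a prime the same data for the twist of `V`. Two facts
give the partner relation.

* Let `τ_j` be the eigenvalue of `(e₀⁻)^j (e₁⁻)^j` on `U_0`. For `u ∈ U_0` the vector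
  `w = (e₀⁺)^d u` is a lowest weight vector for the second copy of `U_q(sl₂)`, so
  `σ_d (e₁⁻)^j u = (e₁⁻)^j (e₁⁺)^d w` is a known multiple of `(e₁⁺)^(d-j) w`; also `(e₀⁻)^j w` is
  the same multiple of `(e₀⁺)^(d-j) u`. Since `e₀⁻` and `e₁⁺` commute,
  `σ_d τ_j = ([d]! [j]! / [d-j]!)² σ_(d-j)`.

* `σ'_j = τ_j`. On the twist `x₃` and `x₁` act as `x₀` and `x₂` do on `V`, so for `v ∈ U'_0` the
  vector `(q-q⁻¹)^(2j) σ'_j v` is a polynomial in `x₂` times a polynomial in `x₀` applied to `v`,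
  and `x₂ v = q^d v`. Take `U_0`-components: the factor in `x₂` contributes a scalar because
  `U_1 + ⋯ + U_d` is `x₂`-stable; the factor in `x₀` only sees the `U_j`-component of `v`, and turns
  it into a multiple of its image under `(e₀⁻)^j`; and the equation `x₂ v = q^d v` shows that the
  `U_j`-component of `v` is a multiple of the image under `(e₁⁻)^j` of its `U_0`-component. All
  scalars cancel.

Hence `σ_d σ'_j = ([d]! [j]! / [d-j]!)² σ_(d-j)`. For `j = d` this shows `σ_d ≠ 0`, and the general
case is the partner relation for the coefficients of the Drinfel'd polynomials. That the two
diameters agree follows from the triangular shape of `x₂` (respectively `x₃`) with respect to the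
weight spaces of one structure, applied to a lowest weight vector of the other.
-/

noncomputable section

open FreeAlgebra

variable (F : Type) [Field F]

/-- The defining relations of the algebra `□_q` (Terwilliger), on the free algebra
with generators `x_i`, `i ∈ ℤ/4ℤ`. -/
inductive BoxRel (q : F) : FreeAlgebra F (ZMod 4) → FreeAlgebra F (ZMod 4) → Prop
  | rel1 (i : ZMod 4) : BoxRel q
      (q • (ι F i * ι F (i + 1)) - q⁻¹ • (ι F (i + 1) * ι F i))
      ((q - q⁻¹) • (1 : FreeAlgebra F (ZMod 4)))
  | rel2 (i : ZMod 4) : BoxRel q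
      (ι F i ^ 3 * ι F (i + 2) +
        ((q ^ 3 - (q⁻¹) ^ 3) / (q - q⁻¹)) • (ι F i * ι F (i + 2) * ι F i ^ 2))
      (((q ^ 3 - (q⁻¹) ^ 3) / (q - q⁻¹)) • (ι F i ^ 2 * ι F (i + 2) * ι F i) +
        ι F (i + 2) * ι F i ^ 3)

/-- The algebra `□_q`, presented by generators and relations. -/
abbrev BoxQ (q : F) : Type := RingQuot (BoxRel F q)

/-- The generators `x_i` of `□_q`. -/
def bx (q : F) (i : ZMod 4) : BoxQ F q :=
  RingQuot.mkAlgHom F (BoxRel F q) (ι F i)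

/-- `f` acts semisimply: `V` is spanned by the eigenspaces of `f`. -/
def SemisimpleOn {V : Type} [AddCommGroup V] [Module F V] (f : Module.End F V) : Prop :=
  (⨆ θ : F, Module.End.eigenspace f θ) = ⊤

/-- The set of (distinct) eigenvalues of `f`. -/
def EigSet {V : Type} [AddCommGroup V] [Module F V] (f : Module.End F V) : Set F :=
  {θ : F | Module.End.eigenspace f θ ≠ ⊥}

/-- The representation `π` of `A` on `V` is irreducible. -/
def IsIrrep {A V : Type} [Ring A] [Algebra F A] [AddCommGroup V] [Module F V]
    (π : A →ₐ[F] Module.End F V) : Prop :=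
  Nontrivial V ∧ ∀ W : Submodule F V, (∀ a : A, ∀ v ∈ W, π a v ∈ W) → W = ⊥ ∨ W = ⊤

/-- Isomorphism of representations of `A`. -/
def RepIso {A V W : Type} [Ring A] [Algebra F A] [AddCommGroup V] [Module F V]
    [AddCommGroup W] [Module F W]
    (π : A →ₐ[F] Module.End F V) (π' : A →ₐ[F] Module.End F W) : Prop :=
  ∃ σ : V ≃ₗ[F] W, ∀ (a : A) (v : V), σ (π a v) = π' a (σ v)

/-- The `□_q`-module given by `π` has type `1` and diameter `d`: each generator `x_i`
acts semisimply with set of distinct eigenvalues `{q^(d-2n) : 0 ≤ n ≤ d}`. -/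
def Type1Diam (q : F) {V : Type} [AddCommGroup V] [Module F V]
    (π : BoxQ F q →ₐ[F] Module.End F V) (d : ℕ) : Prop :=
  ∀ i : ZMod 4, SemisimpleOn F (π (bx F q i)) ∧
    EigSet F (π (bx F q i)) =
      {θ : F | ∃ n : ℕ, n ≤ d ∧ θ = q ^ ((d : ℤ) - 2 * (n : ℤ))}

/-- The Chevalley generators of `U_q(L(sl₂))`. -/
inductive LGen : Type
  | e0p | e0m | e1p | e1m | k0 | k0i | k1 | k1i

/-- The defining (Chevalley) relations of `U_q(L(sl₂))`. -/
inductive UqLRel (q : F) : FreeAlgebra F LGen → FreeAlgebra F LGen → Prop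
  | k0inv : UqLRel q (ι F LGen.k0 * ι F LGen.k0i) 1
  | k0inv' : UqLRel q (ι F LGen.k0i * ι F LGen.k0) 1
  | k1inv : UqLRel q (ι F LGen.k1 * ι F LGen.k1i) 1
  | k1inv' : UqLRel q (ι F LGen.k1i * ι F LGen.k1) 1
  | k01 : UqLRel q (ι F LGen.k0 * ι F LGen.k1) 1
  | k10 : UqLRel q (ι F LGen.k1 * ι F LGen.k0) 1
  | conj00p : UqLRel q (ι F LGen.k0 * ι F LGen.e0p * ι F LGen.k0i) ((q ^ 2) • ι F LGen.e0p)
  | conj00m : UqLRel q (ι F LGen.k0 * ι F LGen.e0m * ι F LGen.k0i) ((q ^ 2)⁻¹ • ι F LGen.e0m)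
  | conj11p : UqLRel q (ι F LGen.k1 * ι F LGen.e1p * ι F LGen.k1i) ((q ^ 2) • ι F LGen.e1p)
  | conj11m : UqLRel q (ι F LGen.k1 * ι F LGen.e1m * ι F LGen.k1i) ((q ^ 2)⁻¹ • ι F LGen.e1m)
  | conj01p : UqLRel q (ι F LGen.k0 * ι F LGen.e1p * ι F LGen.k0i) ((q ^ 2)⁻¹ • ι F LGen.e1p)
  | conj01m : UqLRel q (ι F LGen.k0 * ι F LGen.e1m * ι F LGen.k0i) ((q ^ 2) • ι F LGen.e1m)
  | conj10p : UqLRel q (ι F LGen.k1 * ι F LGen.e0p * ι F LGen.k1i) ((q ^ 2)⁻¹ • ι F LGen.e0p)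
  | conj10m : UqLRel q (ι F LGen.k1 * ι F LGen.e0m * ι F LGen.k1i) ((q ^ 2) • ι F LGen.e0m)
  | heis0 : UqLRel q (ι F LGen.e0p * ι F LGen.e0m - ι F LGen.e0m * ι F LGen.e0p)
      ((q - q⁻¹)⁻¹ • (ι F LGen.k0 - ι F LGen.k0i))
  | heis1 : UqLRel q (ι F LGen.e1p * ι F LGen.e1m - ι F LGen.e1m * ι F LGen.e1p)
      ((q - q⁻¹)⁻¹ • (ι F LGen.k1 - ι F LGen.k1i))
  | pm : UqLRel q (ι F LGen.e0p * ι F LGen.e1m) (ι F LGen.e1m * ι F LGen.e0p)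
  | mp : UqLRel q (ι F LGen.e0m * ι F LGen.e1p) (ι F LGen.e1p * ι F LGen.e0m)
  | serre (a b : LGen)
      (hab : (a = LGen.e0p ∧ b = LGen.e1p) ∨ (a = LGen.e1p ∧ b = LGen.e0p) ∨
             (a = LGen.e0m ∧ b = LGen.e1m) ∨ (a = LGen.e1m ∧ b = LGen.e0m)) :
      UqLRel q
        (ι F a ^ 3 * ι F b +
          ((q ^ 3 - (q⁻¹) ^ 3) / (q - q⁻¹)) • (ι F a * ι F b * ι F a ^ 2))
        (((q ^ 3 - (q⁻¹) ^ 3) / (q - q⁻¹)) • (ι F a ^ 2 * ι F b * ι F a) +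
          ι F b * ι F a ^ 3)

/-- The quantum loop algebra `U_q(L(sl₂))`. -/
abbrev UqL (q : F) : Type := RingQuot (UqLRel F q)

/-- The Chevalley generators, as elements of `U_q(L(sl₂))`. -/
def lg (q : F) (g : LGen) : UqL F q := RingQuot.mkAlgHom F (UqLRel F q) (ι F g)

/-- `ψ : □_q → U_q(L(sl₂))` is the embedding coming from the equitable presentation:
it sends `x₀ ↦ K₀ + q(q-q⁻¹)K₀e₀⁻`, `x₁ ↦ K₁ - (q-q⁻¹)e₁⁺`,
`x₂ ↦ K₁ + q(q-q⁻¹)K₁e₁⁻`, `x₃ ↦ K₀ - (q-q⁻¹)e₀⁺`. -/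
def IsPsi (q : F) (ψ : BoxQ F q →ₐ[F] UqL F q) : Prop :=
  ψ (bx F q 0) = lg F q LGen.k0 + (q * (q - q⁻¹)) • (lg F q LGen.k0 * lg F q LGen.e0m) ∧
  ψ (bx F q 1) = lg F q LGen.k1 - (q - q⁻¹) • lg F q LGen.e1p ∧
  ψ (bx F q 2) = lg F q LGen.k1 + (q * (q - q⁻¹)) • (lg F q LGen.k1 * lg F q LGen.e1m) ∧
  ψ (bx F q 3) = lg F q LGen.k0 - (q - q⁻¹) • lg F q LGen.e0p

/-- The `U_q(L(sl₂))`-module given by `Φ` has type `1` and diameter `d`: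
`K₀` acts semisimply with set of distinct eigenvalues `{q^(2i-d) : 0 ≤ i ≤ d}`. -/
def UqLType1 (q : F) {V : Type} [AddCommGroup V] [Module F V]
    (Φ : UqL F q →ₐ[F] Module.End F V) (d : ℕ) : Prop :=
  SemisimpleOn F (Φ (lg F q LGen.k0)) ∧
  EigSet F (Φ (lg F q LGen.k0)) =
    {θ : F | ∃ i : ℕ, i ≤ d ∧ θ = q ^ (2 * (i : ℤ) - (d : ℤ))}

/-- The lowest weight space `U₀`: the eigenspace of `K₀` with eigenvalue `q^(-d)`. -/
def U0 (q : F) {V : Type} [AddCommGroup V] [Module F V]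
    (Φ : UqL F q →ₐ[F] Module.End F V) (d : ℕ) : Submodule F V :=
  Module.End.eigenspace (Φ (lg F q LGen.k0)) (q ^ (-(d : ℤ)))

/-- `σ j` is the eigenvalue of `(e₁⁺)^j (e₀⁺)^j` on `U₀`. -/
def IsSigma (q : F) {V : Type} [AddCommGroup V] [Module F V]
    (Φ : UqL F q →ₐ[F] Module.End F V) (d : ℕ) (σ : ℕ → F) : Prop :=
  ∀ j : ℕ, ∀ v ∈ U0 F q Φ d,
    Φ (lg F q LGen.e1p ^ j * lg F q LGen.e0p ^ j) v = σ j • v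

/-- The `q`-integer `[n]_q`. -/
def qInt (q : F) (n : ℕ) : F := (q ^ (n : ℤ) - q ^ (-(n : ℤ))) / (q - q⁻¹)

/-- The `q`-factorial `[n]_q!`. -/
def qFact (q : F) (n : ℕ) : F := ∏ i ∈ Finset.range n, qInt F q (i + 1)

/-- The Drinfel'd polynomial `Σ_{i=0}^d (-1)^i σ_i z^i / ([i]_q!)²`. -/
def polyOf (q : F) (d : ℕ) (σ : ℕ → F) : Polynomial F :=
  ∑ i ∈ Finset.range (d + 1),
    Polynomial.C ((-1) ^ i * σ i / (qFact F q i) ^ 2) * Polynomial.X ^ i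

/-- `f` is the Drinfel'd polynomial of the type-1 irreducible `□_q`-module given by `π`:
`π` is the pullback along `ψ` of a `U_q(L(sl₂))`-module structure `Φ`, which is of type 1
and diameter `d`, has 1-dimensional lowest weight space `U₀`, and `f` is built from the
eigenvalues `σ_j` of `(e₁⁺)^j(e₀⁺)^j` on `U₀`. -/
def DrinOf (q : F) {V : Type} [AddCommGroup V] [Module F V]
    (π : BoxQ F q →ₐ[F] Module.End F V) (f : Polynomial F) : Prop :=
  ∃ ψ : BoxQ F q →ₐ[F] UqL F q, IsPsi F q ψ ∧
    ∃ Φ : UqL F q →ₐ[F] Module.End F V, Φ.comp ψ = π ∧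
      ∃ (d : ℕ) (σ : ℕ → F), UqLType1 F q Φ d ∧
        Module.finrank F ↥(U0 F q Φ d) = 1 ∧
        IsSigma F q Φ d σ ∧ f = polyOf F q d σ

section Polynomial

open Polynomial

variable {𝕜 : Type*} [Field 𝕜] {f g : 𝕜[X]}

/-- The partner `f^∨(z) = z^d f(z⁻¹) / a_d` of `f = Σ_{i ≤ d} a_i z^i`. -/
def partner (f : 𝕜[X]) : 𝕜[X] := f.leadingCoeff⁻¹ • f.reverse

theorem reverse_X_sub_C {a : 𝕜} (ha : a ≠ 0) :
    (X - C a).reverse = C (-a) * (X - C a⁻¹) := by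
  have h : (X - C a : 𝕜[X]) = 1 * X + C (-a) := by
    rw [one_mul, C_neg, sub_eq_add_neg]
  rw [h, reverse_add_C, reverse_mul_X, ← C_1, reverse_C, mul_sub, ← C_mul, neg_mul,
    mul_inv_cancel₀ ha, natDegree_C_mul_X _ one_ne_zero, pow_one, map_neg C 1,
    sub_neg_eq_add, add_comm]

theorem roots_reverse_prod_X_sub_C {s : Multiset 𝕜} (hs : 0 ∉ s) :
    (s.map fun a => X - C a).prod.reverse.roots = s.map (·⁻¹) := by
  induction s using Multiset.induction_on with
  | empty => rw [Multiset.map_zero, Multiset.prod_zero, ← C_1, reverse_C, roots_C,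
      Multiset.map_zero]
  | cons a s ih =>
    obtain ⟨ha, hs⟩ : 0 ≠ a ∧ 0 ∉ s := by simpa only [Multiset.mem_cons, not_or] using hs
    have hprod : (s.map fun a => X - C a).prod.reverse ≠ 0 := by
      rw [Ne, reverse_eq_zero]
      exact (monic_multiset_prod_of_monic _ _ fun a _ => monic_X_sub_C a).ne_zero
    rw [Multiset.map_cons, Multiset.prod_cons, reverse_mul_of_domain, reverse_X_sub_C ha.symm,
      mul_assoc, roots_C_mul _ (neg_ne_zero.2 ha.symm),
      roots_mul (mul_ne_zero (X_sub_C_ne_zero _) hprod), roots_X_sub_C, ih hs,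
      Multiset.map_cons, Multiset.singleton_add]

theorem roots_reverse_eq_zero (hf : f.roots = 0) : f.reverse.roots = 0 := by
  refine Multiset.eq_zero_of_forall_notMem fun a ha => ?_
  obtain ⟨hrev, hroot⟩ := mem_roots'.1 ha
  have hf0 : f ≠ 0 := mt reverse_eq_zero.2 hrev
  have ha0 : a ≠ 0 := by
    rintro rfl
    rw [IsRoot, ← coeff_zero_eq_eval_zero, coeff_zero_reverse, leadingCoeff_eq_zero] at hroot
    exact hf0 hroot
  let := invertibleOfNonzero (inv_ne_zero ha0)
  have hinv : f.IsRoot a⁻¹ := by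
    rw [IsRoot, ← eval₂_id, ← eval₂_reverse_eq_zero_iff, invOf_eq_inv, inv_inv]
    exact hroot
  exact Multiset.notMem_zero a⁻¹ (hf ▸ (mem_roots hf0).2 hinv)

theorem roots_reverse (hf : f.coeff 0 ≠ 0) : f.reverse.roots = f.roots.map (·⁻¹) := by
  obtain ⟨g, hfg, -, hg⟩ := f.exists_prod_multiset_X_sub_C_mul
  have hf0 : f ≠ 0 := by
    rintro rfl
    exact hf (coeff_zero 0)
  have h0 : 0 ∉ f.roots := fun h => hf (coeff_zero_eq_eval_zero f ▸ isRoot_of_mem_roots h)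
  have hrev : (f.roots.map fun a => X - C a).prod.reverse * g.reverse ≠ 0 := by
    rwa [← reverse_mul_of_domain, hfg, Ne, reverse_eq_zero]
  nth_rewrite 1 [← hfg]
  rw [reverse_mul_of_domain, roots_mul hrev, roots_reverse_prod_X_sub_C h0,
    roots_reverse_eq_zero hg, add_zero]

theorem roots_partner (hf : f.coeff 0 ≠ 0) : (partner f).roots = f.roots.map (·⁻¹) := by
  have hlc : f.leadingCoeff ≠ 0 := by
    rw [Ne, leadingCoeff_eq_zero]
    rintro rfl
    exact hf (coeff_zero 0)
  rw [partner, smul_eq_C_mul, roots_C_mul _ (inv_ne_zero hlc), roots_reverse hf]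

theorem eq_partner_of_coeff (hf : f ≠ 0) (hg : g.natDegree ≤ f.natDegree)
    (h : ∀ m j, m + j = f.natDegree → f.leadingCoeff * g.coeff j = f.coeff m) :
    g = partner f := by
  ext j
  rw [partner, coeff_smul, coeff_reverse, smul_eq_mul,
    eq_inv_mul_iff_mul_eq₀ (leadingCoeff_ne_zero.2 hf)]
  rcases le_or_gt j f.natDegree with hj | hj
  · rw [revAt_le hj, h _ j (Nat.sub_add_cancel hj)]
  · rw [revAt_eq_self_of_lt hj, coeff_eq_zero_of_natDegree_lt hj,
      coeff_eq_zero_of_natDegree_lt (hg.trans_lt hj), mul_zero]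

end Polynomial

section Triangular

open Polynomial

variable {R V : Type*} [CommRing R] [AddCommGroup V] [Module R V]

theorem aeval_sub_smul_prod_apply {T E : Module.End R V} {c : R} {θ : ℕ → R} {w : V} (j : ℕ)
    (h : ∀ k < j, T ((E ^ k) w) = θ k • (E ^ k) w) :
    aeval (T - c • E) (∏ k ∈ Finset.range j, (X - C (θ k))) w = (-c) ^ j • (E ^ j) w := by
  induction j with
  | zero => simp
  | succ j ih =>
    rw [Finset.prod_range_succ_comm, map_mul, Module.End.mul_apply,
      ih fun k hk => h k (hk.trans j.lt_succ_self), map_smul, pow_succ, mul_smul, map_sub, aeval_X,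
      aeval_C, LinearMap.sub_apply, LinearMap.sub_apply, h j j.lt_succ_self,
      Module.algebraMap_end_apply, sub_sub_cancel_left, LinearMap.smul_apply, neg_smul,
      pow_succ' E, Module.End.mul_apply]

theorem apply_aeval_of_apply_eq_smul {W : Type*} [AddCommGroup W] [Module R W] {T : Module.End R V}
    {P : V →ₗ[R] W} {μ : R} (h : ∀ u, P (T u) = μ • P u) (p : R[X]) (u : V) :
    P (aeval T p u) = p.eval μ • P u := by
  induction p using Polynomial.induction_on generalizing u with
  | C a => simp
  | add p r hp hr => rw [map_add, LinearMap.add_apply, map_add, hp, hr, eval_add, add_smul]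
  | monomial n a ih =>
    rw [pow_succ, ← mul_assoc, map_mul, Module.End.mul_apply, ih, aeval_X, h, smul_smul,
      eval_mul_X]

variable {T E : Module.End R V} {P : ℤ → Module.End R V} {a b : ℤ → R}

theorem apply_zero_aeval_prod_of_lowering
    (h : ∀ i u, P i (T u) = a i • P i u + b i • E (P (i + 1) u)) (j : ℕ) (u : V) :
    P 0 (aeval T (∏ k ∈ Finset.range j, (X - C (a k))) u) =
      (∏ k ∈ Finset.range j, b k) • (E ^ j) (P j u) := by
  induction j generalizing u with
  | zero => simp
  | succ j ih =>
    rw [Finset.prod_range_succ, map_mul, Module.End.mul_apply, ih, map_sub, aeval_X, aeval_C,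
      LinearMap.sub_apply, map_sub, h, Module.algebraMap_end_apply, map_smul, add_sub_cancel_left,
      map_smul, smul_smul, Finset.prod_range_succ, pow_succ, Module.End.mul_apply, Nat.cast_succ]

theorem prod_smul_apply_of_raising
    (h : ∀ i u, P (i + 1) (T u) = a (i + 1) • P (i + 1) u + b i • E (P i u))
    {μ : R} {v : V} (hv : T v = μ • v) (j : ℕ) :
    (∏ k ∈ Finset.range j, (μ - a (k + 1))) • P j v =
      (∏ k ∈ Finset.range j, b k) • (E ^ j) (P 0 v) := by
  induction j with
  | zero => simp
  | succ j ih =>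
    have hj : (μ - a (j + 1)) • P (j + 1) v = b j • E (P j v) := by
      rw [sub_smul, ← map_smul, ← hv, h, add_sub_cancel_left]
    rw [Finset.prod_range_succ, Finset.prod_range_succ, Nat.cast_succ, mul_smul, hj, smul_comm,
      ← map_smul, ih, map_smul, smul_smul, pow_succ', Module.End.mul_apply, mul_comm]

theorem exists_diagonal_eq_of_raising {𝕜 V : Type*} [Field 𝕜] [AddCommGroup V] [Module 𝕜 V]
    {T E : Module.End 𝕜 V} {P : ℤ → Module.End 𝕜 V} {a b : ℤ → 𝕜}
    (h : ∀ i u, P (i + 1) (T u) = a (i + 1) • P (i + 1) u + b i • E (P i u))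
    {μ : 𝕜} {v : V} (hv : T v = μ • v) (hneg : P (-1) v = 0) (hpos : ∃ i : ℕ, P i v ≠ 0) :
    ∃ i : ℕ, μ = a i ∧ P i v ≠ 0 := by
  classical
  refine ⟨Nat.find hpos, ?_, Nat.find_spec hpos⟩
  have hpred : P ((Nat.find hpos : ℤ) - 1) v = 0 := by
    rcases hi : Nat.find hpos with - | i
    · exact hneg
    · rw [Nat.cast_succ, add_sub_cancel_right]
      exact not_not.1 (Nat.find_min hpos (hi ▸ i.lt_succ_self))
  have hi := h (Nat.find hpos - 1) v
  rw [hpred, map_zero, smul_zero, add_zero, sub_add_cancel, hv, map_smul] at hi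
  exact smul_left_injective 𝕜 (Nat.find_spec hpos) hi

end Triangular

section EigenspaceProjection

variable {F} {V : Type} [AddCommGroup V] [Module F V] {K e : Module.End F V}

theorem apply_mem_eigenspace_of_mul_eq_smul {c θ : F} {u : V} (h : K * e = c • (e * K))
    (hu : u ∈ K.eigenspace θ) : e u ∈ K.eigenspace (c * θ) := by
  rw [Module.End.mem_eigenspace_iff] at hu ⊢
  rw [← Module.End.mul_apply, h, LinearMap.smul_apply, Module.End.mul_apply, hu, map_smul,
    mul_smul]

theorem SemisimpleOn.linearMap_ext {f g : Module.End F V} (hK : SemisimpleOn F K)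
    (h : ∀ μ, ∀ u ∈ K.eigenspace μ, f u = g u) : f = g := by
  refine LinearMap.ext fun u => ?_
  have hu : u ∈ ⨆ μ, K.eigenspace μ := by
    rw [hK]
    exact Submodule.mem_top
  induction hu using Submodule.iSup_induction' with
  | mem μ u hu => exact h μ u hu
  | zero => rw [map_zero, map_zero]
  | add x y _ _ hx hy => rw [map_add, map_add, hx, hy]

theorem SemisimpleOn.isInternal [DecidableEq F] (hK : SemisimpleOn F K) :
    DirectSum.IsInternal K.eigenspace :=
  DirectSum.isInternal_submodule_of_iSupIndep_of_iSup_eq_top K.eigenspaces_iSupIndep hK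

open Classical in
/-- The projection onto the `θ`-eigenspace of a diagonalizable operator along the other
eigenspaces; it is zero if `θ` is not an eigenvalue. -/
def SemisimpleOn.proj (hK : SemisimpleOn F K) (θ : F) : Module.End F V :=
  letI := hK.isInternal.chooseDecomposition
  (K.eigenspace θ).subtype ∘ₗ DirectSum.component F F _ θ ∘ₗ
    (DirectSum.decomposeLinearEquiv K.eigenspace).toLinearMap

variable (hK : SemisimpleOn F K) {θ μ : F} {u : V}

theorem SemisimpleOn.proj_mem (θ : F) (u : V) : hK.proj θ u ∈ K.eigenspace θ :=
  Subtype.property _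

theorem SemisimpleOn.proj_of_mem (hu : u ∈ K.eigenspace θ) : hK.proj θ u = u := by
  classical
  let := hK.isInternal.chooseDecomposition
  exact DirectSum.decompose_of_mem_same K.eigenspace hu

theorem SemisimpleOn.proj_of_mem_ne (hu : u ∈ K.eigenspace μ) (h : μ ≠ θ) :
    hK.proj θ u = 0 := by
  classical
  let := hK.isInternal.chooseDecomposition
  exact DirectSum.decompose_of_mem_ne K.eigenspace hu h

theorem SemisimpleOn.exists_proj_ne_zero (hu : u ≠ 0) : ∃ θ, hK.proj θ u ≠ 0 := by
  classical
  let := hK.isInternal.chooseDecomposition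
  contrapose! hu
  refine (DirectSum.decomposeLinearEquiv K.eigenspace).map_eq_zero_iff.1 ?_
  exact DFinsupp.ext fun θ => Subtype.ext (hu θ)

theorem SemisimpleOn.proj_apply_of_mul_eq_smul {c : F} (hc : c ≠ 0) (h : K * e = c • (e * K))
    (θ : F) (u : V) : hK.proj (c * θ) (e u) = e (hK.proj θ u) := by
  suffices hK.proj (c * θ) * e = e * hK.proj θ from LinearMap.congr_fun this u
  refine hK.linearMap_ext fun μ u hu => ?_
  have heu := apply_mem_eigenspace_of_mul_eq_smul h hu
  rw [Module.End.mul_apply, Module.End.mul_apply]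
  obtain rfl | hμ := eq_or_ne μ θ
  · rw [hK.proj_of_mem heu, hK.proj_of_mem hu]
  · rw [hK.proj_of_mem_ne heu (mt (mul_left_cancel₀ hc) hμ), hK.proj_of_mem_ne hu hμ, map_zero]

end EigenspaceProjection

section QInteger

variable {F} {q : F}

theorem zpow_injective_of_pow_ne_one (hq0 : q ≠ 0) (hq1 : ∀ n : ℕ, 0 < n → q ^ n ≠ 1) :
    Function.Injective (q ^ · : ℤ → F) := by
  have h : ¬IsOfFinOrder (Units.mk0 q hq0) := by
    rw [isOfFinOrder_iff_pow_eq_one]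
    rintro ⟨n, hn, h⟩
    exact hq1 n hn (by simpa using congrArg Units.val h)
  intro a b hab
  exact injective_zpow_iff_not_isOfFinOrder.2 h (Units.ext (by simpa using hab))

theorem ne_zero_of_zpow_injective (hq : Function.Injective (q ^ · : ℤ → F)) : q ≠ 0 := by
  rintro rfl
  have h : (1 : ℤ) = 2 := hq (by simp)
  omega

theorem sub_inv_ne_zero (hq : Function.Injective (q ^ · : ℤ → F)) : q - q⁻¹ ≠ 0 := by
  intro h
  have h' : (1 : ℤ) = -1 := hq (by simpa using sub_eq_zero.1 h)
  omega

theorem qInt_ne_zero (hq : Function.Injective (q ^ · : ℤ → F)) {n : ℕ} (hn : n ≠ 0) :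
    qInt F q n ≠ 0 := by
  refine div_ne_zero (sub_ne_zero.2 fun h => ?_) (sub_inv_ne_zero hq)
  have h' : (n : ℤ) = -n := hq h
  omega

theorem qFact_ne_zero (hq : Function.Injective (q ^ · : ℤ → F)) (n : ℕ) : qFact F q n ≠ 0 :=
  Finset.prod_ne_zero_iff.2 fun i _ => qInt_ne_zero hq i.succ_ne_zero

theorem qFact_zero : qFact F q 0 = 1 := Finset.prod_range_zero _

theorem qFact_succ (n : ℕ) : qFact F q (n + 1) = qFact F q n * qInt F q (n + 1) :=
  Finset.prod_range_succ _ _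

/-- The eigenvalue `q^(2i-d)` of `K₀` on the weight space `U_i` of a module of diameter `d`; the
eigenvalue of `K₁` there is its inverse. -/
def wt (q : F) (d : ℕ) (i : ℤ) : F := q ^ (2 * i - (d : ℤ))

theorem wt_ne_zero (hq0 : q ≠ 0) (d : ℕ) (i : ℤ) : wt q d i ≠ 0 := zpow_ne_zero _ hq0

theorem wt_zero (d : ℕ) : wt q d 0 = q ^ (-(d : ℤ)) := by
  rw [wt, mul_zero, zero_sub]

theorem wt_succ (hq0 : q ≠ 0) (d : ℕ) (i : ℤ) : wt q d (i + 1) = q ^ 2 * wt q d i := by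
  rw [wt, wt, ← zpow_natCast, ← zpow_add₀ hq0]
  congr 1
  push_cast
  ring

theorem wt_eq_inv_mul_wt_succ (hq0 : q ≠ 0) (d : ℕ) (i : ℤ) :
    wt q d i = (q ^ 2)⁻¹ * wt q d (i + 1) := by
  rw [wt_succ hq0, inv_mul_cancel_left₀ (pow_ne_zero 2 hq0)]

theorem wt_self (d : ℕ) : wt q d d = (wt q d 0)⁻¹ := by
  rw [wt, wt, ← zpow_neg]
  congr 1
  ring

theorem wt_injective (hq : Function.Injective (q ^ · : ℤ → F)) (d : ℕ) :
    Function.Injective (wt q d) := by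
  intro i j h
  have h' : 2 * i - (d : ℤ) = 2 * j - d := hq h
  omega

theorem qInt_mul_qInt_succ_sub (m j : ℕ) :
    qInt F q m * qInt F q (j + 1) -
        (q - q⁻¹)⁻¹ * (wt q (m + j) m - (wt q (m + j) m)⁻¹) =
      qInt F q (m + 1) * qInt F q j := by
  obtain h | h := eq_or_ne (q - q⁻¹) 0
  · simp [qInt, h]
  have hq0 : q ≠ 0 := by
    rintro rfl
    simp at h
  have hwt : wt q (m + j) m = q ^ m / q ^ j := by
    rw [wt, ← zpow_natCast, ← zpow_natCast, ← zpow_sub₀ hq0]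
    congr 1
    push_cast
    ring
  have hm : q ^ m ≠ 0 := pow_ne_zero _ hq0
  have hj : q ^ j ≠ 0 := pow_ne_zero _ hq0
  have h2 : q ^ 2 - 1 ≠ 0 := by
    contrapose! h
    field_simp
    rwa [mul_zero]
  rw [hwt]
  simp only [qInt, Nat.cast_add, Nat.cast_one, neg_add, zpow_add₀ hq0, zpow_neg, zpow_natCast,
    zpow_one]
  generalize q ^ m = M at *
  generalize q ^ j = J at *
  field_simp
  ring

end QInteger

section UqSl2Triple

variable {F}

/-- The defining relations of `U_q(sl₂)` for `e, f, k, k' = k⁻¹`: in `U_q(L(sl₂))` they hold for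
`e_i⁺, e_i⁻, K_i, K_i⁻¹` with `i ∈ {0, 1}`. -/
structure IsUqSl2Triple (q : F) {A : Type*} [Ring A] [Algebra F A] (e f k k' : A) : Prop where
  mul_inv : k * k' = 1
  inv_mul : k' * k = 1
  conj_e : k * e = q ^ 2 • (e * k)
  conj_f : k * f = (q ^ 2)⁻¹ • (f * k)
  comm : e * f - f * e = (q - q⁻¹)⁻¹ • (k - k')

namespace IsUqSl2Triple

variable {q : F} {A B : Type*} [Ring A] [Algebra F A] [Ring B] [Algebra F B] {e f k k' : A}

theorem map (t : IsUqSl2Triple q e f k k') (φ : A →ₐ[F] B) :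
    IsUqSl2Triple q (φ e) (φ f) (φ k) (φ k') where
  mul_inv := by rw [← map_mul, t.mul_inv, map_one]
  inv_mul := by rw [← map_mul, t.inv_mul, map_one]
  conj_e := by rw [← map_mul, ← map_mul, t.conj_e, map_smul]
  conj_f := by rw [← map_mul, ← map_mul, t.conj_f, map_smul]
  comm := by rw [← map_mul, ← map_mul, ← map_sub, t.comm, map_smul, map_sub]

theorem inv_mul_eq_smul (t : IsUqSl2Triple q e f k k') {c : F} (hc : c ≠ 0) {x : A}
    (hx : k * x = c • (x * k)) : k' * x = c⁻¹ • (x * k') := by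
  have h : x * k' = c • (k' * x) := calc
    x * k' = k' * (k * x) * k' := by rw [← mul_assoc k', t.inv_mul, one_mul]
    _ = c • (k' * x) := by
      rw [hx, mul_smul_comm, smul_mul_assoc, mul_assoc, mul_assoc, t.mul_inv, mul_one]
  rw [h, inv_smul_smul₀ hc]

theorem inv_conj_e (t : IsUqSl2Triple q e f k k') (hq0 : q ≠ 0) :
    k' * e = (q ^ 2)⁻¹ • (e * k') :=
  t.inv_mul_eq_smul (pow_ne_zero 2 hq0) t.conj_e

theorem inv_conj_f (t : IsUqSl2Triple q e f k k') (hq0 : q ≠ 0) :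
    k' * f = q ^ 2 • (f * k') := by
  simpa only [inv_inv] using t.inv_mul_eq_smul (inv_ne_zero (pow_ne_zero 2 hq0)) t.conj_f

variable {V : Type} [AddCommGroup V] [Module F V] {e f k k' : Module.End F V} {v : V}

theorem inv_apply (t : IsUqSl2Triple q e f k k') {θ : F} (hθ : θ ≠ 0) (hv : k v = θ • v) :
    k' v = θ⁻¹ • v := by
  have h : k' (k v) = v := LinearMap.congr_fun t.inv_mul v
  rw [hv, map_smul] at h
  rw [eq_inv_smul_iff₀ hθ, h]

theorem k_apply_e_pow (t : IsUqSl2Triple q e f k k') (hq0 : q ≠ 0) {d : ℕ}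
    (hv : k v = wt q d 0 • v) (m : ℕ) : k ((e ^ m) v) = wt q d m • (e ^ m) v := by
  induction m with
  | zero => exact hv
  | succ m ih =>
    rw [← Module.End.mem_eigenspace_iff] at ih ⊢
    rw [Nat.cast_succ, wt_succ hq0, pow_succ' e, Module.End.mul_apply]
    exact apply_mem_eigenspace_of_mul_eq_smul t.conj_e ih

theorem f_apply_e_pow_succ (t : IsUqSl2Triple q e f k k') (hq0 : q ≠ 0) {d : ℕ}
    (hk : k v = wt q d 0 • v) (hf : f v = 0) {m j : ℕ} (hmj : m + j = d) :
    f ((e ^ (m + 1)) v) = (qInt F q (m + 1) * qInt F q j) • (e ^ m) v := by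
  have hfe (m j : ℕ) (hmj : m + j = d)
      (hef : e (f ((e ^ m) v)) = (qInt F q m * qInt F q (j + 1)) • (e ^ m) v) :
      f ((e ^ (m + 1)) v) = (qInt F q (m + 1) * qInt F q j) • (e ^ m) v := by
    have hcomm := LinearMap.congr_fun t.comm ((e ^ m) v)
    rw [LinearMap.smul_apply, LinearMap.sub_apply, LinearMap.sub_apply, Module.End.mul_apply,
      Module.End.mul_apply, hef, t.k_apply_e_pow hq0 hk,
      t.inv_apply (wt_ne_zero hq0 _ _) (t.k_apply_e_pow hq0 hk m), ← sub_smul, smul_smul,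
      sub_eq_iff_eq_add', ← sub_eq_iff_eq_add, ← sub_smul] at hcomm
    rw [pow_succ', Module.End.mul_apply, ← hcomm, ← qInt_mul_qInt_succ_sub, hmj]
  induction m generalizing j with
  | zero => exact hfe 0 j hmj (by simp [qInt, hf])
  | succ m ih =>
    refine hfe (m + 1) j hmj ?_
    rw [ih (j := j + 1) (by omega), map_smul, pow_succ' e, Module.End.mul_apply]

theorem f_pow_apply_e_pow (t : IsUqSl2Triple q e f k k')
    (hq : Function.Injective (q ^ · : ℤ → F)) {d : ℕ} (hk : k v = wt q d 0 • v) (hf : f v = 0)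
    {m j : ℕ} (hmj : m + j = d) :
    (f ^ j) ((e ^ d) v) = (qFact F q d * qFact F q j / qFact F q m) • (e ^ m) v := by
  induction j generalizing m with
  | zero =>
    obtain rfl : m = d := hmj
    rw [qFact_zero, mul_one, div_self (qFact_ne_zero hq m), one_smul, pow_zero,
      Module.End.one_apply]
  | succ j ih =>
    rw [pow_succ', Module.End.mul_apply, ih (m := m + 1) (by omega), map_smul,
      t.f_apply_e_pow_succ (ne_zero_of_zpow_injective hq) hk hf hmj, smul_smul, qFact_succ m,
      qFact_succ j]
    have hm := qInt_ne_zero hq m.succ_ne_zero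
    have hm' := qFact_ne_zero hq m
    congr 1
    field_simp

end IsUqSl2Triple

end UqSl2Triple

section LoopAlgebra

open LGen

variable {F} {q : F}

theorem mul_eq_smul_mul_of_conj {A : Type*} [Ring A] [Algebra F A] {k k' x : A} {c : F}
    (hk : k' * k = 1) (h : k * x * k' = c • x) : k * x = c • (x * k) := by
  rw [← smul_mul_assoc, ← h, mul_assoc _ k', hk, mul_one]

theorem lg_k0i : lg F q k0i = lg F q k1 := by
  have h : lg F q k0i * lg F q k0 = 1 := by
    simpa only [map_mul, map_one] using! RingQuot.mkAlgHom_rel F (UqLRel.k0inv' (q := q))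
  have h' : lg F q k0 * lg F q k1 = 1 := by
    simpa only [map_mul, map_one] using! RingQuot.mkAlgHom_rel F (UqLRel.k01 (q := q))
  exact left_inv_eq_right_inv h h'

theorem lg_k1i : lg F q k1i = lg F q k0 := by
  have h : lg F q k1i * lg F q k1 = 1 := by
    simpa only [map_mul, map_one] using! RingQuot.mkAlgHom_rel F (UqLRel.k1inv' (q := q))
  have h' : lg F q k1 * lg F q k0 = 1 := by
    simpa only [map_mul, map_one] using! RingQuot.mkAlgHom_rel F (UqLRel.k10 (q := q))
  exact left_inv_eq_right_inv h h'

theorem commute_e0m_e1p : Commute (lg F q e0m) (lg F q e1p) := by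
  simpa only [map_mul] using! RingQuot.mkAlgHom_rel F (UqLRel.mp (q := q))

theorem isUqSl2Triple_zero :
    IsUqSl2Triple q (lg F q e0p) (lg F q e0m) (lg F q k0) (lg F q k1) := by
  have hk : lg F q k1 * lg F q k0 = 1 := by
    simpa only [map_mul, map_one] using! RingQuot.mkAlgHom_rel F (UqLRel.k10 (q := q))
  refine ⟨?_, hk, mul_eq_smul_mul_of_conj hk ?_, mul_eq_smul_mul_of_conj hk ?_, ?_⟩
  · simpa only [map_mul, map_one] using! RingQuot.mkAlgHom_rel F (UqLRel.k01 (q := q))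
  · rw [← lg_k0i]
    simpa only [map_mul, map_smul] using! RingQuot.mkAlgHom_rel F (UqLRel.conj00p (q := q))
  · rw [← lg_k0i]
    simpa only [map_mul, map_smul] using! RingQuot.mkAlgHom_rel F (UqLRel.conj00m (q := q))
  · rw [← lg_k0i]
    simpa only [map_mul, map_smul, map_sub] using!
      RingQuot.mkAlgHom_rel F (UqLRel.heis0 (q := q))

theorem isUqSl2Triple_one :
    IsUqSl2Triple q (lg F q e1p) (lg F q e1m) (lg F q k1) (lg F q k0) := by
  have hk : lg F q k0 * lg F q k1 = 1 := isUqSl2Triple_zero.mul_inv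
  refine ⟨isUqSl2Triple_zero.inv_mul, hk, mul_eq_smul_mul_of_conj hk ?_,
    mul_eq_smul_mul_of_conj hk ?_, ?_⟩
  · rw [← lg_k1i]
    simpa only [map_mul, map_smul] using! RingQuot.mkAlgHom_rel F (UqLRel.conj11p (q := q))
  · rw [← lg_k1i]
    simpa only [map_mul, map_smul] using! RingQuot.mkAlgHom_rel F (UqLRel.conj11m (q := q))
  · rw [← lg_k1i]
    simpa only [map_mul, map_smul, map_sub] using!
      RingQuot.mkAlgHom_rel F (UqLRel.heis1 (q := q))

theorem IsPsi.eq {ψ ψ' : BoxQ F q →ₐ[F] UqL F q} (h : IsPsi F q ψ) (h' : IsPsi F q ψ') :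
    ψ = ψ' := by
  obtain ⟨h0, h1, h2, h3⟩ := h
  obtain ⟨h0', h1', h2', h3'⟩ := h'
  refine RingQuot.ringQuot_ext' F _ _ (FreeAlgebra.hom_ext (funext fun i => ?_))
  change ψ (bx F q i) = ψ' (bx F q i)
  fin_cases i
  exacts [h0.trans h0'.symm, h1.trans h1'.symm, h2.trans h2'.symm, h3.trans h3'.symm]

end LoopAlgebra

section WeightSpace

open LGen

variable {F} {q : F} {V : Type} [AddCommGroup V] [Module F V] {Φ : UqL F q →ₐ[F] Module.End F V}
  {d : ℕ} {e : Module.End F V} {i : ℤ} {u : V}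

/-- The weight space `U_i`, the eigenspace of `K₀` with eigenvalue `q^(2i-d)`; all `i ∈ ℤ` are
allowed, so that raising and lowering need no boundary cases. -/
def wtSpace (Φ : UqL F q →ₐ[F] Module.End F V) (d : ℕ) (i : ℤ) : Submodule F V :=
  (Φ (lg F q k0)).eigenspace (wt q d i)

theorem wtSpace_zero : wtSpace Φ d 0 = U0 F q Φ d := by
  rw [wtSpace, U0, wt_zero]

theorem k0_apply_of_mem_wtSpace (hu : u ∈ wtSpace Φ d i) :
    Φ (lg F q k0) u = wt q d i • u :=
  Module.End.mem_eigenspace_iff.1 hu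

theorem k1_apply_of_mem_wtSpace (hq0 : q ≠ 0) (hu : u ∈ wtSpace Φ d i) :
    Φ (lg F q k1) u = (wt q d i)⁻¹ • u :=
  (isUqSl2Triple_zero.map Φ).inv_apply (wt_ne_zero hq0 d i) (k0_apply_of_mem_wtSpace hu)

theorem apply_mem_wtSpace_of_raising (hq0 : q ≠ 0)
    (he : Φ (lg F q k0) * e = q ^ 2 • (e * Φ (lg F q k0))) (hu : u ∈ wtSpace Φ d i) :
    e u ∈ wtSpace Φ d (i + 1) := by
  rw [wtSpace, wt_succ hq0]
  exact apply_mem_eigenspace_of_mul_eq_smul he hu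

theorem apply_mem_wtSpace_of_lowering (hq0 : q ≠ 0)
    (he : Φ (lg F q k0) * e = (q ^ 2)⁻¹ • (e * Φ (lg F q k0))) (hu : u ∈ wtSpace Φ d (i + 1)) :
    e u ∈ wtSpace Φ d i := by
  rw [wtSpace, wt_eq_inv_mul_wt_succ hq0]
  exact apply_mem_eigenspace_of_mul_eq_smul he hu

theorem e0p_pow_apply_mem_wtSpace (hq0 : q ≠ 0) (hu : u ∈ U0 F q Φ d) (j : ℕ) :
    (Φ (lg F q e0p) ^ j) u ∈ wtSpace Φ d j := by
  rw [← wtSpace_zero] at hu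
  exact Module.End.mem_eigenspace_iff.2
    ((isUqSl2Triple_zero.map Φ).k_apply_e_pow hq0 (k0_apply_of_mem_wtSpace hu) j)

theorem e1p_pow_apply_mem_wtSpace (hq0 : q ≠ 0) (j : ℕ) (hu : u ∈ wtSpace Φ d (i + j)) :
    (Φ (lg F q e1p) ^ j) u ∈ wtSpace Φ d i := by
  induction j generalizing i with
  | zero => simpa using hu
  | succ j ih =>
    rw [pow_succ', Module.End.mul_apply]
    refine apply_mem_wtSpace_of_lowering hq0 ((isUqSl2Triple_one.map Φ).inv_conj_e hq0) (ih ?_)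
    rwa [add_assoc, add_comm 1, ← Nat.cast_succ]

namespace UqLType1

variable (hΦ : UqLType1 F q Φ d) (hq : Function.Injective (q ^ · : ℤ → F))

include hΦ

theorem exists_eq_wt {θ : F} (hθ : (Φ (lg F q k0)).eigenspace θ ≠ ⊥) :
    ∃ n : ℕ, n ≤ d ∧ θ = wt q d n :=
  (Set.ext_iff.1 hΦ.2 θ).1 hθ

theorem U0_ne_bot : U0 F q Φ d ≠ ⊥ :=
  (Set.ext_iff.1 hΦ.2 _).2 ⟨0, d.zero_le, by simp⟩

include hq

theorem wtSpace_eq_bot (hi : i < 0 ∨ (d : ℤ) < i) : wtSpace Φ d i = ⊥ := by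
  by_contra h
  obtain ⟨n, hn, hin⟩ := hΦ.exists_eq_wt h
  have := wt_injective hq d hin
  omega

theorem e0m_apply_eq_zero (hu : u ∈ U0 F q Φ d) : Φ (lg F q e0m) u = 0 := by
  have hq0 := ne_zero_of_zpow_injective hq
  rw [← Submodule.mem_bot F, ← hΦ.wtSpace_eq_bot hq (.inl neg_one_lt_zero)]
  exact apply_mem_wtSpace_of_lowering hq0 (isUqSl2Triple_zero.map Φ).conj_f (by
    rwa [neg_add_cancel, wtSpace_zero])

theorem e1p_apply_eq_zero (hu : u ∈ U0 F q Φ d) : Φ (lg F q e1p) u = 0 := by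
  have hq0 := ne_zero_of_zpow_injective hq
  rw [← Submodule.mem_bot F, ← hΦ.wtSpace_eq_bot hq (.inl neg_one_lt_zero)]
  exact apply_mem_wtSpace_of_lowering hq0 ((isUqSl2Triple_one.map Φ).inv_conj_e hq0) (by
    rwa [neg_add_cancel, wtSpace_zero])

theorem e1m_apply_eq_zero (hu : u ∈ wtSpace Φ d d) : Φ (lg F q e1m) u = 0 := by
  have hq0 := ne_zero_of_zpow_injective hq
  rw [← Submodule.mem_bot F, ← hΦ.wtSpace_eq_bot hq (.inr (lt_add_one (d : ℤ)))]
  exact apply_mem_wtSpace_of_raising hq0 ((isUqSl2Triple_one.map Φ).inv_conj_f hq0) hu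

/-- The vector `(e₀⁺)^d u` is extremal for both copies of `U_q(sl₂)`, and `(e₀⁻)^j` can be moved
past `(e₁⁺)^m`. -/
theorem lowering_sigma {σ : ℕ → F} (hσ : IsSigma F q Φ d σ) (hu : u ∈ U0 F q Φ d) {m j : ℕ}
    (hmj : m + j = d) :
    σ d • (Φ (lg F q e0m) ^ j) ((Φ (lg F q e1m) ^ j) u) =
      ((qFact F q d * qFact F q j / qFact F q m) ^ 2 * σ m) • u := by
  have hq0 := ne_zero_of_zpow_injective hq
  have hσ' (j : ℕ) : (Φ (lg F q e1p) ^ j) ((Φ (lg F q e0p) ^ j) u) = σ j • u := by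
    rw [← hσ j u hu, map_mul, map_pow, map_pow, Module.End.mul_apply]
  set w := (Φ (lg F q e0p) ^ d) u
  have hwd : w ∈ wtSpace Φ d d := e0p_pow_apply_mem_wtSpace hq0 hu d
  have hlow₀ : (Φ (lg F q e0m) ^ j) w = _ := (isUqSl2Triple_zero.map Φ).f_pow_apply_e_pow hq
    (k0_apply_of_mem_wtSpace (wtSpace_zero.ge hu)) (hΦ.e0m_apply_eq_zero hq hu) hmj
  have hlow₁ := (isUqSl2Triple_one.map Φ).f_pow_apply_e_pow hq
    (v := w) ((k1_apply_of_mem_wtSpace hq0 hwd).trans (by rw [wt_self, inv_inv]))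
    (hΦ.e1m_apply_eq_zero hq hwd) hmj
  have hcomm : Commute (Φ (lg F q e0m) ^ j) (Φ (lg F q e1p) ^ m) :=
    (commute_e0m_e1p.map Φ).pow_pow j m
  rw [← map_smul, ← map_smul, ← hσ', hlow₁, map_smul, ← Module.End.mul_apply, hcomm.eq,
    Module.End.mul_apply, hlow₀, map_smul, hσ', smul_smul, smul_smul]
  ring_nf

end UqLType1

end WeightSpace

section WeightProjection

open LGen

variable {F} {q : F} {V : Type} [AddCommGroup V] [Module F V] {Φ : UqL F q →ₐ[F] Module.End F V}
  {d : ℕ} {e : Module.End F V} {i : ℤ} {u : V}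

namespace UqLType1

/-- The projection of `V` onto the weight space `U_i` along the other weight spaces. -/
def wtProj (hΦ : UqLType1 F q Φ d) (i : ℤ) : Module.End F V := hΦ.1.proj (wt q d i)

variable (hΦ : UqLType1 F q Φ d) (hq : Function.Injective (q ^ · : ℤ → F))

theorem wtProj_mem (i : ℤ) (u : V) : hΦ.wtProj i u ∈ wtSpace Φ d i := hΦ.1.proj_mem _ u

theorem exists_wtProj_ne_zero (hu : u ≠ 0) : ∃ i : ℕ, hΦ.wtProj i u ≠ 0 := by
  obtain ⟨θ, hθ⟩ := hΦ.1.exists_proj_ne_zero hu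
  obtain ⟨i, -, rfl⟩ := hΦ.exists_eq_wt ((Submodule.ne_bot_iff _).2 ⟨_, hΦ.1.proj_mem θ u, hθ⟩)
  exact ⟨i, hθ⟩

include hq in
theorem wtProj_neg_one (u : V) : hΦ.wtProj (-1) u = 0 := by
  have h := hΦ.wtProj_mem (-1) u
  rwa [hΦ.wtSpace_eq_bot hq (.inl neg_one_lt_zero), Submodule.mem_bot] at h

theorem wtProj_k0 (i : ℤ) (u : V) :
    hΦ.wtProj i (Φ (lg F q k0) u) = wt q d i • hΦ.wtProj i u := by
  rw [← k0_apply_of_mem_wtSpace (hΦ.wtProj_mem i u), wtProj,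
    ← hΦ.1.proj_apply_of_mul_eq_smul one_ne_zero (one_smul F _).symm, one_mul]

theorem wtProj_k1 (hq0 : q ≠ 0) (i : ℤ) (u : V) :
    hΦ.wtProj i (Φ (lg F q k1) u) = (wt q d i)⁻¹ • hΦ.wtProj i u := by
  have h : Φ (lg F q k0) (Φ (lg F q k1) u) = u :=
    LinearMap.congr_fun (isUqSl2Triple_zero.map Φ).mul_inv u
  rw [eq_inv_smul_iff₀ (wt_ne_zero hq0 d i), ← wtProj_k0, h]

theorem wtProj_apply_of_raising (hq0 : q ≠ 0)
    (he : Φ (lg F q k0) * e = q ^ 2 • (e * Φ (lg F q k0))) (i : ℤ) (u : V) :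
    hΦ.wtProj (i + 1) (e u) = e (hΦ.wtProj i u) := by
  rw [wtProj, wtProj, wt_succ hq0, hΦ.1.proj_apply_of_mul_eq_smul (pow_ne_zero 2 hq0) he]

theorem wtProj_apply_of_lowering (hq0 : q ≠ 0)
    (he : Φ (lg F q k0) * e = (q ^ 2)⁻¹ • (e * Φ (lg F q k0))) (i : ℤ) (u : V) :
    hΦ.wtProj i (e u) = e (hΦ.wtProj (i + 1) u) := by
  rw [wtProj, wtProj, wt_eq_inv_mul_wt_succ hq0,
    hΦ.1.proj_apply_of_mul_eq_smul (inv_ne_zero (pow_ne_zero 2 hq0)) he]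

variable {ψ : BoxQ F q →ₐ[F] UqL F q} (hψ : IsPsi F q ψ)

include hψ

theorem wtProj_bx_zero (hq0 : q ≠ 0) (i : ℤ) (u : V) :
    hΦ.wtProj i (Φ (ψ (bx F q 0)) u) =
      wt q d i • hΦ.wtProj i u +
        (wt q d i * (q * (q - q⁻¹))) • Φ (lg F q e0m) (hΦ.wtProj (i + 1) u) := by
  rw [hψ.1, map_add, map_smul, map_mul, LinearMap.add_apply, LinearMap.smul_apply,
    Module.End.mul_apply, map_add, map_smul, wtProj_k0, wtProj_k0,
    hΦ.wtProj_apply_of_lowering hq0 (isUqSl2Triple_zero.map Φ).conj_f, smul_smul,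
    mul_comm (q * _)]

theorem wtProj_bx_two (hq0 : q ≠ 0) (i : ℤ) (u : V) :
    hΦ.wtProj (i + 1) (Φ (ψ (bx F q 2)) u) =
      (wt q d (i + 1))⁻¹ • hΦ.wtProj (i + 1) u +
        ((wt q d (i + 1))⁻¹ * (q * (q - q⁻¹))) • Φ (lg F q e1m) (hΦ.wtProj i u) := by
  rw [hψ.2.2.1, map_add, map_smul, map_mul, LinearMap.add_apply, LinearMap.smul_apply,
    Module.End.mul_apply, map_add, map_smul, hΦ.wtProj_k1 hq0, hΦ.wtProj_k1 hq0,
    hΦ.wtProj_apply_of_raising hq0 ((isUqSl2Triple_one.map Φ).inv_conj_f hq0), smul_smul,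
    mul_comm (q * _)]

theorem wtProj_bx_three (hq0 : q ≠ 0) (i : ℤ) (u : V) :
    hΦ.wtProj (i + 1) (Φ (ψ (bx F q 3)) u) =
      wt q d (i + 1) • hΦ.wtProj (i + 1) u +
        (-(q - q⁻¹)) • Φ (lg F q e0p) (hΦ.wtProj i u) := by
  rw [hψ.2.2.2, map_sub, map_smul, LinearMap.sub_apply, LinearMap.smul_apply, map_sub, map_smul,
    wtProj_k0, hΦ.wtProj_apply_of_raising hq0 (isUqSl2Triple_zero.map Φ).conj_e, neg_smul,
    sub_eq_add_neg]

include hΦ hq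

theorem bx_zero_apply (hu : u ∈ U0 F q Φ d) : Φ (ψ (bx F q 0)) u = wt q d 0 • u := by
  rw [hψ.1, map_add, map_smul, map_mul, LinearMap.add_apply, LinearMap.smul_apply,
    Module.End.mul_apply, hΦ.e0m_apply_eq_zero hq hu, map_zero, smul_zero, add_zero,
    k0_apply_of_mem_wtSpace (wtSpace_zero.ge hu)]

theorem bx_one_apply (hu : u ∈ U0 F q Φ d) : Φ (ψ (bx F q 1)) u = (wt q d 0)⁻¹ • u := by
  rw [hψ.2.1, map_sub, map_smul, LinearMap.sub_apply, LinearMap.smul_apply,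
    hΦ.e1p_apply_eq_zero hq hu, smul_zero, sub_zero,
    k1_apply_of_mem_wtSpace (ne_zero_of_zpow_injective hq) (wtSpace_zero.ge hu)]

end UqLType1

end WeightProjection

section Twist

open LGen Polynomial

variable {F} {q : F} {V : Type} [AddCommGroup V] [Module F V]
  {Φ Φ' : UqL F q →ₐ[F] Module.End F V} {ψ : BoxQ F q →ₐ[F] UqL F q} {d d' : ℕ} {v : V}

theorem aeval_bx_one_aeval_bx_three (hq0 : q ≠ 0) (hψ : IsPsi F q ψ) {σ : ℕ → F}
    (hσ : IsSigma F q Φ d σ) (hv : v ∈ U0 F q Φ d) (j : ℕ) :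
    aeval (Φ (ψ (bx F q 1))) (∏ k ∈ Finset.range j, (X - C (wt q d (k + 1))⁻¹))
        (aeval (Φ (ψ (bx F q 3))) (∏ k ∈ Finset.range j, (X - C (wt q d k))) v) =
      (((q - q⁻¹) ^ 2) ^ j * σ j) • v := by
  have he0p (k : ℕ) : (Φ (lg F q e0p) ^ k) v ∈ wtSpace Φ d k :=
    e0p_pow_apply_mem_wtSpace hq0 hv k
  have hx₃ : aeval (Φ (ψ (bx F q 3))) (∏ k ∈ Finset.range j, (X - C (wt q d k))) v =
      (-(q - q⁻¹)) ^ j • (Φ (lg F q e0p) ^ j) v := by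
    rw [hψ.2.2.2, map_sub, map_smul]
    exact aeval_sub_smul_prod_apply j fun k _ => k0_apply_of_mem_wtSpace (he0p k)
  have hx₁ : aeval (Φ (ψ (bx F q 1))) (∏ k ∈ Finset.range j, (X - C (wt q d (k + 1))⁻¹))
        ((Φ (lg F q e0p) ^ j) v) =
      (-(q - q⁻¹)) ^ j • (Φ (lg F q e1p) ^ j) ((Φ (lg F q e0p) ^ j) v) := by
    rw [hψ.2.1, map_sub, map_smul, ← Finset.prod_range_reflect]
    refine aeval_sub_smul_prod_apply (θ := fun k => (wt q d ((j - 1 - k : ℕ) + 1))⁻¹) j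
      fun k hk => ?_
    refine k1_apply_of_mem_wtSpace hq0 (e1p_pow_apply_mem_wtSpace hq0 k ?_)
    convert he0p j using 1
    congr 1
    omega
  rw [hx₃, map_smul, hx₁, smul_smul, ← mul_pow, neg_mul_neg, ← sq, mul_smul, ← hσ j v hv, map_mul,
    map_pow, map_pow, Module.End.mul_apply]

theorem prod_lowering_mul_prod_raising (hq0 : q ≠ 0) (d j : ℕ) :
    (∏ k ∈ Finset.range j, wt q d k * (q * (q - q⁻¹))) *
        ∏ k ∈ Finset.range j, (wt q d (k + 1))⁻¹ * (q * (q - q⁻¹)) =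
      ((q - q⁻¹) ^ 2) ^ j := by
  rw [← Finset.prod_mul_distrib]
  refine (Finset.prod_congr rfl fun k _ => ?_).trans (by rw [Finset.prod_const, Finset.card_range])
  have h := wt_ne_zero hq0 d k
  rw [wt_succ hq0]
  generalize q - q⁻¹ = c
  field_simp

theorem UqLType1.wtProj_zero_aeval (hΦ : UqLType1 F q Φ d)
    (hq : Function.Injective (q ^ · : ℤ → F)) (hψ : IsPsi F q ψ)
    (hv : Φ (ψ (bx F q 2)) v = (wt q d 0)⁻¹ • v) (j : ℕ) :
    hΦ.wtProj 0
        (aeval (Φ (ψ (bx F q 2))) (∏ k ∈ Finset.range j, (X - C (wt q d (k + 1))⁻¹))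
          (aeval (Φ (ψ (bx F q 0))) (∏ k ∈ Finset.range j, (X - C (wt q d k))) v)) =
      ((q - q⁻¹) ^ 2) ^ j •
        (Φ (lg F q e0m) ^ j) ((Φ (lg F q e1m) ^ j) (hΦ.wtProj 0 v)) := by
  have hq0 := ne_zero_of_zpow_injective hq
  have hx₂ (u : V) :
      hΦ.wtProj 0 (Φ (ψ (bx F q 2)) u) = (wt q d 0)⁻¹ • hΦ.wtProj 0 u := by
    simpa only [neg_add_cancel, hΦ.wtProj_neg_one hq, map_zero, smul_zero, add_zero] using
      hΦ.wtProj_bx_two hψ hq0 (-1) u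
  rw [apply_aeval_of_apply_eq_smul hx₂,
    apply_zero_aeval_prod_of_lowering (hΦ.wtProj_bx_zero hψ hq0), eval_prod, smul_comm, ← map_smul]
  simp only [eval_sub, eval_X, eval_C]
  rw [prod_smul_apply_of_raising (a := fun i => (wt q d i)⁻¹)
      (b := fun i => (wt q d (i + 1))⁻¹ * (q * (q - q⁻¹))) (hΦ.wtProj_bx_two hψ hq0) hv,
    map_smul, smul_smul, prod_lowering_mul_prod_raising hq0]

theorem UqLType1.exists_wt_eq_of_bx_two (hΦ : UqLType1 F q Φ d)
    (hq : Function.Injective (q ^ · : ℤ → F)) (hψ : IsPsi F q ψ) {μ : F}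
    (hv : Φ (ψ (bx F q 2)) v = μ • v) (hv0 : v ≠ 0) :
    ∃ i : ℕ, μ = (wt q d i)⁻¹ ∧ hΦ.wtProj i v ≠ 0 :=
  exists_diagonal_eq_of_raising (a := fun i => (wt q d i)⁻¹)
    (b := fun i => (wt q d (i + 1))⁻¹ * (q * (q - q⁻¹)))
    (hΦ.wtProj_bx_two hψ (ne_zero_of_zpow_injective hq)) hv (hΦ.wtProj_neg_one hq v)
    (hΦ.exists_wtProj_ne_zero hv0)

theorem UqLType1.exists_wt_eq_of_bx_three (hΦ : UqLType1 F q Φ d)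
    (hq : Function.Injective (q ^ · : ℤ → F)) (hψ : IsPsi F q ψ) {μ : F}
    (hv : Φ (ψ (bx F q 3)) v = μ • v) (hv0 : v ≠ 0) : ∃ i : ℕ, μ = wt q d i := by
  obtain ⟨i, hi, -⟩ := exists_diagonal_eq_of_raising (a := wt q d) (b := fun _ => -(q - q⁻¹))
    (hΦ.wtProj_bx_three hψ (ne_zero_of_zpow_injective hq)) hv (hΦ.wtProj_neg_one hq v)
    (hΦ.exists_wtProj_ne_zero hv0)
  exact ⟨i, hi⟩

theorem bx_two_apply_of_twist (hΦ' : UqLType1 F q Φ' d')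
    (hq : Function.Injective (q ^ · : ℤ → F)) (hψ : IsPsi F q ψ)
    (htw : ∀ i, Φ (ψ (bx F q (i + 1))) = Φ' (ψ (bx F q i))) (hv : v ∈ U0 F q Φ' d') :
    Φ (ψ (bx F q 2)) v = (wt q d' 0)⁻¹ • v := by
  rw [← one_add_one_eq_two, htw, hΦ'.bx_one_apply hq hψ hv]

theorem diameter_eq_of_twist (hΦ : UqLType1 F q Φ d) (hΦ' : UqLType1 F q Φ' d')
    (hq : Function.Injective (q ^ · : ℤ → F)) (hψ : IsPsi F q ψ)
    (htw : ∀ i, Φ (ψ (bx F q (i + 1))) = Φ' (ψ (bx F q i))) : d' = d := by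
  obtain ⟨u, hu, hu0⟩ := (Submodule.ne_bot_iff _).1 hΦ.U0_ne_bot
  obtain ⟨v, hv, hv0⟩ := (Submodule.ne_bot_iff _).1 hΦ'.U0_ne_bot
  have hux : Φ' (ψ (bx F q 3)) u = wt q d 0 • u := by
    rw [← htw]
    exact hΦ.bx_zero_apply hq hψ hu
  obtain ⟨i, hi, -⟩ :=
    hΦ.exists_wt_eq_of_bx_two hq hψ (bx_two_apply_of_twist hΦ' hq hψ htw hv) hv0
  obtain ⟨i', hi'⟩ := hΦ'.exists_wt_eq_of_bx_three hq hψ hux hu0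
  have h : 2 * 0 - (d' : ℤ) = 2 * i - d := hq (inv_injective hi)
  have h' : 2 * 0 - (d : ℤ) = 2 * i' - d' := hq hi'
  omega

theorem UqLType1.lowering_wtProj_zero_of_twist (hΦ : UqLType1 F q Φ d)
    (hΦ' : UqLType1 F q Φ' d) (hq : Function.Injective (q ^ · : ℤ → F)) (hψ : IsPsi F q ψ)
    (htw : ∀ i, Φ (ψ (bx F q (i + 1))) = Φ' (ψ (bx F q i))) {σ' : ℕ → F}
    (hσ' : IsSigma F q Φ' d σ') (hv : v ∈ U0 F q Φ' d) (j : ℕ) :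
    (Φ (lg F q e0m) ^ j) ((Φ (lg F q e1m) ^ j) (hΦ.wtProj 0 v)) = σ' j • hΦ.wtProj 0 v := by
  have hx₁ : Φ (ψ (bx F q 2)) = Φ' (ψ (bx F q 1)) := htw 1
  have hx₃ : Φ (ψ (bx F q 0)) = Φ' (ψ (bx F q 3)) := htw 3
  have h := hΦ.wtProj_zero_aeval hq hψ (bx_two_apply_of_twist hΦ' hq hψ htw hv) j
  rw [hx₁, hx₃, aeval_bx_one_aeval_bx_three (ne_zero_of_zpow_injective hq) hψ hσ' hv, map_smul,
    mul_smul] at h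
  exact (smul_right_injective V (pow_ne_zero j (pow_ne_zero 2 (sub_inv_ne_zero hq))) h).symm

theorem sigma_mul_sigma_of_twist (hΦ : UqLType1 F q Φ d) (hΦ' : UqLType1 F q Φ' d)
    (hq : Function.Injective (q ^ · : ℤ → F)) (hψ : IsPsi F q ψ)
    (htw : ∀ i, Φ (ψ (bx F q (i + 1))) = Φ' (ψ (bx F q i))) {σ σ' : ℕ → F}
    (hσ : IsSigma F q Φ d σ) (hσ' : IsSigma F q Φ' d σ') {m j : ℕ} (hmj : m + j = d) :
    σ d * σ' j = (qFact F q d * qFact F q j / qFact F q m) ^ 2 * σ m := by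
  obtain ⟨v, hv, hv0⟩ := (Submodule.ne_bot_iff _).1 hΦ'.U0_ne_bot
  obtain ⟨i, hi, hiv⟩ :=
    hΦ.exists_wt_eq_of_bx_two hq hψ (bx_two_apply_of_twist hΦ' hq hψ htw hv) hv0
  rw [← wt_injective hq d (inv_injective hi)] at hiv
  have h := hΦ.lowering_sigma hq hσ (wtSpace_zero.le (hΦ.wtProj_mem 0 v)) hmj
  rw [hΦ.lowering_wtProj_zero_of_twist hΦ' hq hψ htw hσ' hv, smul_smul] at h
  exact smul_left_injective F hiv h

end Twist

section DrinfeldPolynomial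

open Polynomial

variable {F} {q : F} {d : ℕ} {σ σ' : ℕ → F}

theorem UqLType1.sigma_zero {V : Type} [AddCommGroup V] [Module F V]
    {Φ : UqL F q →ₐ[F] Module.End F V} (hΦ : UqLType1 F q Φ d) (hσ : IsSigma F q Φ d σ) :
    σ 0 = 1 := by
  obtain ⟨u, hu, hu0⟩ := (Submodule.ne_bot_iff _).1 hΦ.U0_ne_bot
  refine smul_left_injective F hu0 ?_
  simpa using (hσ 0 u hu).symm

theorem coeff_polyOf {n : ℕ} (hn : n ≤ d) :
    (polyOf F q d σ).coeff n = (-1) ^ n * σ n / qFact F q n ^ 2 := by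
  simp [polyOf, finsetSum_coeff, hn]

theorem natDegree_polyOf_le : (polyOf F q d σ).natDegree ≤ d :=
  natDegree_sum_le_of_forall_le _ _ fun i hi =>
    (natDegree_C_mul_X_pow_le _ i).trans (Finset.mem_range_succ_iff.1 hi)

theorem polyOf_eq_partner (hq : Function.Injective (q ^ · : ℤ → F)) (hσ₀ : σ 0 ≠ 0)
    (h : ∀ m j, m + j = d →
      σ d * σ' j = (qFact F q d * qFact F q j / qFact F q m) ^ 2 * σ m) :
    polyOf F q d σ' = partner (polyOf F q d σ) := by
  have hfact := qFact_ne_zero hq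
  have hσd : σ d ≠ 0 := by
    refine left_ne_zero_of_mul (b := σ' d) ?_
    rw [h 0 d d.zero_add]
    exact mul_ne_zero (pow_ne_zero 2 (div_ne_zero (mul_ne_zero (hfact _) (hfact _)) (hfact _))) hσ₀
  have hd : (polyOf F q d σ).coeff d ≠ 0 := by
    rw [coeff_polyOf le_rfl]
    exact div_ne_zero (mul_ne_zero (pow_ne_zero _ (neg_ne_zero.2 one_ne_zero)) hσd)
      (pow_ne_zero 2 (hfact d))
  have hdeg : (polyOf F q d σ).natDegree = d :=
    natDegree_polyOf_le.antisymm (le_natDegree_of_ne_zero hd)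
  refine eq_partner_of_coeff (fun h0 => hd (by rw [h0, coeff_zero]))
    (hdeg.symm ▸ natDegree_polyOf_le) fun m j hmj => ?_
  rw [hdeg] at hmj
  rw [leadingCoeff, hdeg, coeff_polyOf le_rfl, coeff_polyOf (by omega), coeff_polyOf (by omega)]
  have hsign : (-1 : F) ^ d * (-1) ^ j = (-1) ^ m := by
    rw [← hmj, pow_add, mul_assoc, ← mul_pow, neg_one_mul, neg_neg, one_pow, mul_one]
  have hd' := hfact d
  have hj := hfact j
  have hm := hfact m
  calc
    (-1) ^ d * σ d / qFact F q d ^ 2 * ((-1) ^ j * σ' j / qFact F q j ^ 2) =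
        (-1) ^ d * (-1) ^ j * (σ d * σ' j) / (qFact F q d ^ 2 * qFact F q j ^ 2) := by ring
    _ = (-1) ^ m * σ m / qFact F q m ^ 2 := by
      rw [hsign, h m j hmj]
      field_simp

end DrinfeldPolynomial

theorem stmt16_general {q : F} (hq0 : q ≠ 0) (hq1 : ∀ n : ℕ, 0 < n → q ^ n ≠ 1)
    {V : Type} [AddCommGroup V] [Module F V] {π : BoxQ F q →ₐ[F] Module.End F V}
    {ρ : BoxQ F q →ₐ[F] BoxQ F q} (hρ : ∀ i : ZMod 4, ρ (bx F q i) = bx F q (i + 1))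
    {f g : Polynomial F} (hf : DrinOf F q π f) (hg : DrinOf F q (π.comp ρ) g) :
    g = f.leadingCoeff⁻¹ • f.reverse ∧ g.roots = f.roots.map (fun z => z⁻¹) := by
  obtain ⟨ψ, hψ, Φ, rfl, d, σ, hΦ, -, hσ, rfl⟩ := hf
  obtain ⟨ψ', hψ', Φ', hΦπ, d', σ', hΦ', -, hσ', rfl⟩ := hg
  obtain rfl : ψ' = ψ := hψ'.eq hψ
  have htw (i : ZMod 4) : Φ (ψ' (bx F q (i + 1))) = Φ' (ψ' (bx F q i)) := by
    rw [← hρ]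
    exact (DFunLike.congr_fun hΦπ (bx F q i)).symm
  have hq := zpow_injective_of_pow_ne_one hq0 hq1
  obtain rfl : d' = d := diameter_eq_of_twist hΦ hΦ' hq hψ htw
  have hσ₀ : σ 0 ≠ 0 := hΦ.sigma_zero hσ ▸ one_ne_zero
  have hcoeff : (polyOf F q d' σ).coeff 0 ≠ 0 := by
    simpa [coeff_polyOf, qFact_zero] using hσ₀
  have hpartner : polyOf F q d' σ' = partner (polyOf F q d' σ) :=
    polyOf_eq_partner hq hσ₀ fun _ _ => sigma_mul_sigma_of_twist hΦ hΦ' hq hψ htw hσ hσ'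
  exact ⟨hpartner, hpartner ▸ roots_partner hcoeff⟩

/-- The Drinfel'd polynomials of a type-1 irreducible `□_q`-module `V` and of its
twist `ρV` are partners: `P_{ρV}(z) = z^d P_V(1/z) / a_d`; in particular the roots of
`P_{ρV}` are exactly the inverses of the roots of `P_V`. -/
theorem stmt16 [IsAlgClosed F] [CharZero F] (q : F) (hq0 : q ≠ 0)
    (hq1 : ∀ n : ℕ, 0 < n → q ^ n ≠ 1)
    (V : Type) [AddCommGroup V] [Module F V] [FiniteDimensional F V]
    (π : BoxQ F q →ₐ[F] Module.End F V) (hirr : IsIrrep F π)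
    (hty : ∃ d : ℕ, Type1Diam F q π d)
    (ρ : BoxQ F q ≃ₐ[F] BoxQ F q) (hρ : ∀ i : ZMod 4, ρ (bx F q i) = bx F q (i + 1))
    (f g : Polynomial F)
    (hf : DrinOf F q π f) (hg : DrinOf F q (π.comp ρ.toAlgHom) g) :
    g = f.leadingCoeff⁻¹ • f.reverse ∧ g.roots = f.roots.map (fun z => z⁻¹) :=
  stmt16_general F hq0 hq1 (ρ := ρ.toAlgHom) hρ hf hg
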